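/- arXiv:1602.08896 — 2 statements merged into one kernel-verified Lean document; each statement's English description precedes it below -/
import Mathlib

section
/- Let N ≥ 1 and let P be a 2N×2N complex matrix satisfying: (i) P*S = SP; (ii) SP positive semidefinite; (iii) P + K·P̄·K = 1, where S = diag(1,−1) in N×N blocks, K is the block swap [[0,1],[1,0]], and P̄ is the entrywise conjugate. Then there exist N×N complex matrices U, V such that the block matrix φ = [[U, V̄],[V, Ū]] satisfies φSφ* = S (so φ is a Bogoliubov transformation), and a diagonal real N×N matrix ρ with nonnegative entries, such that φ*·P·(φ*)⁻¹ equals the block-diagonal matrix [[1+ρ, 0],[0, −ρ]]. -/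
open Matrix
open scoped ComplexOrder

/-- Entrywise complex conjugate of a matrix. -/
def matConj {m n : Type*} (M : Matrix m n ℂ) : Matrix m n ℂ := M.map (starRingEnd ℂ)

/-!
Write `J M = K M̄ K`, an antilinear ring involution with `J S = -S`. Condition (iii) says that
`A = SP` satisfies `J A = A - S`, so `A` and `J A` are both positive semidefinite and `H = A + J A`
is positive definite, because `H x = 0` forces `A x = (J A) x = 0` and hence `S x = 0`.

It remains to diagonalize the `J`-invariant matrix `H` and the form `S` simultaneously. Put
`R = H^(-1/2)`, which is again `J`-invariant because positive square roots are unique. Then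
`M = R S R` is Hermitian with `J M = -M`, so `v ↦ K v̄` maps the `λ`-eigenspace of `M` onto the
`-λ`-eigenspace. The orthonormal eigenvectors `X` with positive eigenvalues, together with `K X̄`,
therefore form a `J`-invariant unitary `W` diagonalizing `M`. Rescaling the columns of `R W` by
`|λ|^(-1/2)` gives a `J`-invariant `Ψ` with `Ψ* S Ψ = S` and `Ψ* H Ψ = diag(d, d)`. Since
`2A = H + S`, also `Ψ* A Ψ = diag(1 + ρ, ρ)` with `ρ = (d - 1) / 2`, and `φ = S Ψ S = (Ψ*)⁻¹` is the
required Bogoliubov transformation.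
-/

section Frames

variable {R m ι κ : Type*} [Fintype m]

theorem conjTranspose_mul_self_submatrix [NonAssocSemiring R] [StarRing R] [DecidableEq ι]
    [DecidableEq κ] {X : Matrix m κ R} (hX : Xᴴ * X = 1) {e : ι → κ} (he : Function.Injective e) :
    (X.submatrix id e)ᴴ * X.submatrix id e = 1 := by
  rw [conjTranspose_submatrix, ← submatrix_mul _ _ e id e Function.bijective_id, hX,
    submatrix_one e he]

theorem mul_submatrix_eq_submatrix_mul_diagonal [NonUnitalNonAssocSemiring R] [Fintype ι]
    [Fintype κ] [DecidableEq ι] [DecidableEq κ] {M : Matrix m m R} {X : Matrix m κ R} {a : κ → R}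
    (hX : M * X = X * diagonal a) (e : ι → κ) :
    M * X.submatrix id e = X.submatrix id e * diagonal (a ∘ e) := by
  ext i j
  have entry := congrFun₂ hX i (e j)
  rw [mul_diagonal] at entry
  rw [mul_diagonal]
  exact entry

theorem card_le_card_of_conjTranspose_mul_self_eq_one [CommRing R] [StarRing R] [Nontrivial R]
    [Fintype ι] [DecidableEq ι] {X : Matrix m ι R} (h : Xᴴ * X = 1) :
    Fintype.card ι ≤ Fintype.card m := by
  have hrank := rank_mul_le_right Xᴴ X
  rw [h, rank_one] at hrank
  exact hrank.trans X.rank_le_card_height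

end Frames

section Hermitian

variable {𝕜 m : Type*} [RCLike 𝕜] [Fintype m]

theorem conjTranspose_mul_eq_zero_of_eigenvalues_ne {ι κ : Type*} [Fintype ι] [Fintype κ]
    [DecidableEq ι] [DecidableEq κ] {M : Matrix m m 𝕜} (hM : M.IsHermitian)
    {X : Matrix m ι 𝕜} {Y : Matrix m κ 𝕜} {a : ι → ℝ} {b : κ → ℝ}
    (hX : M * X = X * diagonal fun i => (a i : 𝕜))
    (hY : M * Y = Y * diagonal fun j => (b j : 𝕜)) (hab : ∀ i j, a i ≠ b j) :
    Xᴴ * Y = 0 := by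
  have hXM : Xᴴ * M = diagonal (fun i => (a i : 𝕜)) * Xᴴ := by
    simpa [conjTranspose_mul, hM.eq, diagonal_conjTranspose, Pi.star_def] using
      congrArg conjTranspose hX
  have commute : diagonal (fun i => (a i : 𝕜)) * (Xᴴ * Y)
      = Xᴴ * Y * diagonal fun j => (b j : 𝕜) := by
    rw [← Matrix.mul_assoc, ← hXM, Matrix.mul_assoc, hY, ← Matrix.mul_assoc]
  ext i j
  have entry := congrFun₂ commute i j
  rw [diagonal_mul, mul_diagonal, mul_comm] at entry
  by_contra h
  exact hab i j (RCLike.ofReal_injective (mul_left_cancel₀ h entry))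

variable [DecidableEq m]

theorem exists_unitary_diagonalization {M : Matrix m m 𝕜} (hM : M.IsHermitian) :
    ∃ B : Matrix m m 𝕜, Bᴴ * B = 1 ∧ M * B = B * diagonal fun i => (hM.eigenvalues i : 𝕜) := by
  let U := hM.eigenvectorUnitary
  have hU : (U : Matrix m m 𝕜)ᴴ * U = 1 := Unitary.coe_star_mul_self U
  have spectral : M = U * (diagonal fun i => (hM.eigenvalues i : 𝕜)) * (U : Matrix m m 𝕜)ᴴ :=
    hM.spectral_theorem
  refine ⟨U, hU, ?_⟩
  calc M * U = U * (diagonal fun i => (hM.eigenvalues i : 𝕜)) * ((U : Matrix m m 𝕜)ᴴ * U) := by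
        rw [← Matrix.mul_assoc, ← spectral]
    _ = U * diagonal fun i => (hM.eigenvalues i : 𝕜) := by rw [hU, Matrix.mul_one]

theorem eigenvalues_ne_zero_of_isUnit {M : Matrix m m 𝕜} (hM : M.IsHermitian) (hu : IsUnit M)
    (i : m) : hM.eigenvalues i ≠ 0 := by
  have hdet := ((isUnit_iff_isUnit_det M).mp hu).ne_zero
  rw [hM.det_eq_prod_eigenvalues, Finset.prod_ne_zero_iff] at hdet
  exact_mod_cast hdet i (Finset.mem_univ i)

theorem posDef_add_of_isUnit_sub {A B : Matrix m m 𝕜} (hA : A.PosSemidef) (hB : B.PosSemidef)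
    (hAB : IsUnit (A - B)) : (A + B).PosDef := by
  refine .of_dotProduct_mulVec_pos (hA.add hB).isHermitian fun x hx =>
    ((hA.add hB).dotProduct_mulVec_nonneg x).lt_of_ne' fun h => hx ?_
  rw [add_mulVec, dotProduct_add,
    add_eq_zero_iff_of_nonneg (hA.dotProduct_mulVec_nonneg x) (hB.dotProduct_mulVec_nonneg x),
    hA.dotProduct_mulVec_zero_iff, hB.dotProduct_mulVec_zero_iff] at h
  apply mulVec_injective_iff_isUnit.mpr hAB
  rw [sub_mulVec, h.1, h.2, sub_zero, mulVec_zero]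

end Hermitian

section SignMatrix

/-- The signature matrix `S = diag(1, -1)` of the indefinite form preserved by Bogoliubov
transformations. -/
def signMatrix (R n : Type*) [Ring R] [DecidableEq n] : Matrix (n ⊕ n) (n ⊕ n) R :=
  fromBlocks 1 0 0 (-1)

variable {R n : Type*} [Ring R] [DecidableEq n]

theorem signMatrix_mul_self [Fintype n] : signMatrix R n * signMatrix R n = 1 := by
  simp [signMatrix, fromBlocks_multiply]

theorem conjTranspose_signMatrix [StarRing R] : (signMatrix R n)ᴴ = signMatrix R n := by
  simp [signMatrix, fromBlocks_conjTranspose]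

theorem conjTranspose_signMatrix_conj_mul_eq_one [Fintype n] [StarRing R]
    {Ψ : Matrix (n ⊕ n) (n ⊕ n) R} (hΨ : Ψᴴ * signMatrix R n * Ψ = signMatrix R n) :
    (signMatrix R n * Ψ * signMatrix R n)ᴴ * Ψ = 1 := by
  calc (signMatrix R n * Ψ * signMatrix R n)ᴴ * Ψ
      = signMatrix R n * (Ψᴴ * signMatrix R n * Ψ) := by
        simp only [conjTranspose_mul, conjTranspose_signMatrix, Matrix.mul_assoc]
    _ = 1 := by rw [hΨ, signMatrix_mul_self]

theorem signMatrix_conj_mul_signMatrix_mul_conjTranspose {R : Type*} [CommRing R] [StarRing R]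
    [Fintype n] {Ψ : Matrix (n ⊕ n) (n ⊕ n) R}
    (hΨ : Ψᴴ * signMatrix R n * Ψ = signMatrix R n) :
    signMatrix R n * Ψ * signMatrix R n * signMatrix R n *
      (signMatrix R n * Ψ * signMatrix R n)ᴴ = signMatrix R n := by
  rw [Matrix.mul_assoc (signMatrix R n * Ψ), signMatrix_mul_self, Matrix.mul_one, Matrix.mul_assoc,
    mul_eq_one_comm.mp (conjTranspose_signMatrix_conj_mul_eq_one hΨ), Matrix.mul_one]

end SignMatrix

section ParticleHole

variable {R n ι : Type*} [CommRing R] [StarRing R]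

/-- The particle-hole symmetry `B ↦ K B̄` on column families, where `K` is the block swap. It is
written as a row permutation so that no matrix product with `K` appears. -/
def conjSwap (B : Matrix (n ⊕ n) ι R) : Matrix (n ⊕ n) ι R :=
  (B.map (starRingEnd R)).submatrix Sum.swap id

theorem conjSwap_mul_diagonal [Fintype ι] [DecidableEq ι] (B : Matrix (n ⊕ n) ι R) (a : ι → R) :
    conjSwap (B * diagonal a) = conjSwap B * diagonal fun i => starRingEnd R (a i) := by
  ext i j
  simp [conjSwap, mul_diagonal]

variable [Fintype n]

theorem conjTranspose_conjSwap_mul_conjSwap (B : Matrix (n ⊕ n) ι R) :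
    (conjSwap B)ᴴ * conjSwap B = (Bᴴ * B).map (starRingEnd R) := by
  rw [conjSwap, conjTranspose_submatrix,
    ← submatrix_mul _ _ id Sum.swap id (Equiv.sumComm n n).bijective, submatrix_id_id,
    Matrix.map_mul]
  rfl

variable [DecidableEq n]

/-- The antilinear conjugation `J : M ↦ K M̄ K` induced by the particle-hole symmetry. -/
def particleHole : Matrix (n ⊕ n) (n ⊕ n) R →+* Matrix (n ⊕ n) (n ⊕ n) R :=
  (reindexRingEquiv R (Equiv.sumComm n n)).toRingHom.comp (starRingEnd R).mapMatrix

theorem particleHole_apply (M : Matrix (n ⊕ n) (n ⊕ n) R) :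
    particleHole M = (M.map (starRingEnd R)).submatrix Sum.swap Sum.swap :=
  rfl

theorem particleHole_fromBlocks (A B C D : Matrix n n R) :
    particleHole (fromBlocks A B C D) =
      fromBlocks (D.map (starRingEnd R)) (C.map (starRingEnd R))
        (B.map (starRingEnd R)) (A.map (starRingEnd R)) := by
  rw [particleHole_apply, fromBlocks_map, fromBlocks_submatrix_sum_swap_sum_swap]

theorem particleHole_eq_mul_mul (M : Matrix (n ⊕ n) (n ⊕ n) R) :
    particleHole M = fromBlocks 0 1 1 0 * M.map (starRingEnd R) * fromBlocks 0 1 1 0 := by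
  rw [← fromBlocks_toBlocks M, particleHole_fromBlocks, fromBlocks_map]
  simp [fromBlocks_multiply]

theorem particleHole_particleHole (M : Matrix (n ⊕ n) (n ⊕ n) R) :
    particleHole (particleHole M) = M := by
  ext i j
  simp [particleHole_apply]

theorem conjSwap_mul (M : Matrix (n ⊕ n) (n ⊕ n) R) (B : Matrix (n ⊕ n) ι R) :
    conjSwap (M * B) = particleHole M * conjSwap B := by
  rw [conjSwap, Matrix.map_mul, submatrix_mul _ _ Sum.swap Sum.swap id
    (Equiv.sumComm n n).bijective]
  rfl

theorem particleHole_fromCols_conjSwap (B : Matrix (n ⊕ n) n R) :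
    particleHole (fromCols B (conjSwap B)) = fromCols B (conjSwap B) := by
  ext i (j | j) <;> simp [particleHole_apply, conjSwap]

theorem exists_fromBlocks_of_particleHole_eq_self {M : Matrix (n ⊕ n) (n ⊕ n) R}
    (hM : particleHole M = M) : ∃ U V : Matrix n n R,
      M = fromBlocks U (V.map (starRingEnd R)) V (U.map (starRingEnd R)) := by
  rw [← fromBlocks_toBlocks M, particleHole_fromBlocks, fromBlocks_inj] at hM
  obtain ⟨-, h₁₂, -, h₂₂⟩ := hM
  exact ⟨M.toBlocks₁₁, M.toBlocks₂₁, by rw [h₁₂, h₂₂, fromBlocks_toBlocks]⟩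

theorem particleHole_signMatrix : particleHole (signMatrix R n) = -signMatrix R n := by
  simp [signMatrix, particleHole_fromBlocks, fromBlocks_neg, Matrix.map_neg]

theorem particleHole_signMatrix_mul {P : Matrix (n ⊕ n) (n ⊕ n) R}
    (hP : P + particleHole P = 1) :
    particleHole (signMatrix R n * P) = signMatrix R n * P - signMatrix R n := by
  rw [map_mul, particleHole_signMatrix, eq_sub_of_add_eq' hP, Matrix.neg_mul, Matrix.mul_sub,
    Matrix.mul_one, neg_sub]

theorem particleHole_inv {A : Matrix (n ⊕ n) (n ⊕ n) R} (hA : IsUnit A) :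
    particleHole A⁻¹ = (particleHole A)⁻¹ := by
  refine (inv_eq_left_inv ?_).symm
  rw [← map_mul, nonsing_inv_mul A ((isUnit_iff_isUnit_det A).mp hA), map_one]

end ParticleHole

section ParticleHoleSpectral

variable {𝕜 n : Type*} [RCLike 𝕜] [Fintype n] [DecidableEq n]

theorem mul_conjSwap_eq_conjSwap_mul_diagonal {ι : Type*} [Fintype ι] [DecidableEq ι]
    {M : Matrix (n ⊕ n) (n ⊕ n) 𝕜} (hJ : particleHole M = -M) {B : Matrix (n ⊕ n) ι 𝕜} {a : ι → ℝ}
    (hB : M * B = B * diagonal fun i => (a i : 𝕜)) :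
    M * conjSwap B = conjSwap B * diagonal fun i => ((-a i : ℝ) : 𝕜) := by
  have h := congrArg conjSwap hB
  simp only [conjSwap_mul, hJ, conjSwap_mul_diagonal, RCLike.conj_ofReal, Matrix.neg_mul] at h
  have hdiag : (diagonal fun i => ((-a i : ℝ) : 𝕜)) = -diagonal fun i => (a i : 𝕜) := by
    simp [← diagonal_neg]
  rw [hdiag, Matrix.mul_neg, ← h, neg_neg]

theorem conjTranspose_mul_self_fromCols_conjSwap {ι : Type*} [Fintype ι] [DecidableEq ι]
    {M : Matrix (n ⊕ n) (n ⊕ n) 𝕜} (hM : M.IsHermitian) (hJ : particleHole M = -M)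
    {B : Matrix (n ⊕ n) ι 𝕜} {a : ι → ℝ} (ha : ∀ i, 0 < a i) (hBB : Bᴴ * B = 1)
    (hB : M * B = B * diagonal fun i => (a i : 𝕜)) :
    (fromCols B (conjSwap B))ᴴ * fromCols B (conjSwap B) = 1 := by
  have hB' := mul_conjSwap_eq_conjSwap_mul_diagonal hJ hB
  have hne : ∀ i j, a i ≠ -a j := fun i j => ((neg_neg_of_pos (ha j)).trans (ha i)).ne'
  rw [conjTranspose_fromCols_eq_fromRows_conjTranspose, fromRows_mul_fromCols, hBB,
    conjTranspose_conjSwap_mul_conjSwap, hBB,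
    conjTranspose_mul_eq_zero_of_eigenvalues_ne hM hB hB' hne,
    conjTranspose_mul_eq_zero_of_eigenvalues_ne hM hB' hB fun i j => (hne j i).symm]
  simp

theorem card_pos_eigenvalues_le {ι : Type*} [Fintype ι] [DecidableEq ι]
    {M : Matrix (n ⊕ n) (n ⊕ n) 𝕜} (hM : M.IsHermitian) (hJ : particleHole M = -M)
    {B : Matrix (n ⊕ n) ι 𝕜} {a : ι → ℝ} (hBB : Bᴴ * B = 1)
    (hB : M * B = B * diagonal fun i => (a i : 𝕜)) :
    Fintype.card {i // 0 < a i} ≤ Fintype.card n := by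
  have h := card_le_card_of_conjTranspose_mul_self_eq_one
    (conjTranspose_mul_self_fromCols_conjSwap hM hJ (fun i : {i // 0 < a i} => i.2)
      (conjTranspose_mul_self_submatrix hBB Subtype.val_injective)
      (mul_submatrix_eq_submatrix_mul_diagonal hB Subtype.val))
  simp only [Fintype.card_sum] at h
  lia

theorem card_pos_eigenvalues_eq {M : Matrix (n ⊕ n) (n ⊕ n) 𝕜} (hM : M.IsHermitian)
    (hJ : particleHole M = -M) (hu : IsUnit M) :
    Fintype.card {i // 0 < hM.eigenvalues i} = Fintype.card n := by
  obtain ⟨B, hBB, hB⟩ := exists_unitary_diagonalization hM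
  have hpos := card_pos_eigenvalues_le hM hJ hBB hB
  have hneg := card_pos_eigenvalues_le (a := -hM.eigenvalues) hM.neg (by rw [map_neg, hJ]) hBB
    (by rw [Matrix.neg_mul, hB]; simp [← diagonal_neg])
  have hcompl : Fintype.card {i // 0 < (-hM.eigenvalues) i}
      = Fintype.card {i // ¬ 0 < hM.eigenvalues i} :=
    Fintype.card_congr <| Equiv.subtypeEquivRight fun i => by
      simp [(eigenvalues_ne_zero_of_isUnit hM hu i).le_iff_lt]
  rw [hcompl, Fintype.card_subtype_compl, Fintype.card_sum] at hneg
  lia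

theorem exists_particleHole_diagonalization {M : Matrix (n ⊕ n) (n ⊕ n) 𝕜} (hM : M.IsHermitian)
    (hJ : particleHole M = -M) (hu : IsUnit M) :
    ∃ (W : Matrix (n ⊕ n) (n ⊕ n) 𝕜) (a : n → ℝ), (∀ i, 0 < a i) ∧ particleHole W = W ∧
      Wᴴ * W = 1 ∧ Wᴴ * M * W =
        fromBlocks (diagonal fun i => (a i : 𝕜)) 0 0 (-diagonal fun i => (a i : 𝕜)) := by
  obtain ⟨B, hBB, hB⟩ := exists_unitary_diagonalization hM
  let e : n ≃ {i // 0 < hM.eigenvalues i} :=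
    Fintype.equivOfCardEq (card_pos_eigenvalues_eq hM hJ hu).symm
  let f : n → n ⊕ n := fun i => e i
  let a : n → ℝ := hM.eigenvalues ∘ f
  let X : Matrix (n ⊕ n) n 𝕜 := B.submatrix id f
  have ha : ∀ i, 0 < a i := fun i => (e i).2
  have hXX : Xᴴ * X = 1 :=
    conjTranspose_mul_self_submatrix hBB (Subtype.val_injective.comp e.injective)
  have hX : M * X = X * diagonal fun i => (a i : 𝕜) := mul_submatrix_eq_submatrix_mul_diagonal hB f
  have hX' := mul_conjSwap_eq_conjSwap_mul_diagonal hJ hX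
  have hWW := conjTranspose_mul_self_fromCols_conjSwap hM hJ ha hXX hX
  refine ⟨fromCols X (conjSwap X), a, ha, particleHole_fromCols_conjSwap X, hWW, ?_⟩
  have hMW : M * fromCols X (conjSwap X) = fromCols X (conjSwap X) *
      fromBlocks (diagonal fun i => (a i : 𝕜)) 0 0 (-diagonal fun i => (a i : 𝕜)) := by
    rw [mul_fromCols, hX, hX', fromCols_mul_fromBlocks]
    simp [← diagonal_neg]
  rw [Matrix.mul_assoc, hMW, ← Matrix.mul_assoc, hWW, Matrix.one_mul]

end ParticleHoleSpectral

section Williamson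

variable {𝕜 n : Type*} [RCLike 𝕜] [Fintype n] [DecidableEq n]

theorem posSemidef_particleHole {A : Matrix (n ⊕ n) (n ⊕ n) 𝕜} (hA : A.PosSemidef) :
    (particleHole A).PosSemidef := by
  have hconj : A.map (starRingEnd 𝕜) = Aᵀ := congrArg transpose hA.isHermitian.eq
  rw [particleHole_apply, hconj]
  exact hA.transpose.submatrix Sum.swap

open scoped MatrixOrder in
theorem particleHole_sqrt {A : Matrix (n ⊕ n) (n ⊕ n) 𝕜} (hA : A.PosSemidef) :
    particleHole (CFC.sqrt A) = CFC.sqrt (particleHole A) := by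
  refine (CFC.sqrt_unique ?_ ?_).symm
  · rw [← map_mul, CFC.sqrt_mul_sqrt_self A hA.nonneg]
  · exact (posSemidef_particleHole (CFC.sqrt_nonneg A).posSemidef).nonneg

open scoped MatrixOrder in
theorem exists_particleHole_invSqrt {H : Matrix (n ⊕ n) (n ⊕ n) 𝕜} (hH : H.PosDef)
    (hJ : particleHole H = H) :
    ∃ R : Matrix (n ⊕ n) (n ⊕ n) 𝕜, R.IsHermitian ∧ particleHole R = R ∧ R * H * R = 1 := by
  refine ⟨CFC.sqrt H⁻¹, (CFC.sqrt_nonneg _).posSemidef.isHermitian, ?_, ?_⟩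
  · rw [particleHole_sqrt hH.inv.posSemidef, particleHole_inv hH.isUnit, hJ]
  · rw [Matrix.mul_assoc]
    apply mul_eq_one_comm.mp
    rw [Matrix.mul_assoc, CFC.sqrt_mul_sqrt_self _ hH.inv.posSemidef.nonneg,
      mul_nonsing_inv H ((isUnit_iff_isUnit_det H).mp hH.isUnit)]

theorem exists_diagonal_rescaling {a : n → ℝ} (ha : ∀ i, 0 < a i) :
    ∃ δ : Matrix n n 𝕜, δᴴ = δ ∧ δ.map (starRingEnd 𝕜) = δ ∧
      δ * (diagonal fun i => (a i : 𝕜)) * δ = 1 ∧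
      δ * δ = diagonal fun i => (((a i)⁻¹ : ℝ) : 𝕜) := by
  have hsq : ∀ i, (√(a i))⁻¹ * (√(a i))⁻¹ = (a i)⁻¹ := fun i => by
    rw [← mul_inv, Real.mul_self_sqrt (ha i).le]
  have hone : ∀ i, (√(a i))⁻¹ * a i * (√(a i))⁻¹ = 1 := fun i => by
    rw [mul_right_comm, hsq, inv_mul_cancel₀ (ha i).ne']
  refine ⟨diagonal fun i => (((√(a i))⁻¹ : ℝ) : 𝕜), ?_, ?_, ?_, ?_⟩
  · simp [diagonal_conjTranspose, Pi.star_def]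
  · simp [diagonal_map]
  · simp only [diagonal_mul_diagonal, ← RCLike.ofReal_mul, hone, RCLike.ofReal_one, diagonal_one]
  · simp only [diagonal_mul_diagonal, ← RCLike.ofReal_mul, hsq]

theorem exists_bosonic_williamson {H : Matrix (n ⊕ n) (n ⊕ n) 𝕜} (hH : H.PosDef)
    (hJ : particleHole H = H) :
    ∃ (Ψ : Matrix (n ⊕ n) (n ⊕ n) 𝕜) (d : n → ℝ), particleHole Ψ = Ψ ∧
      Ψᴴ * signMatrix 𝕜 n * Ψ = signMatrix 𝕜 n ∧
      Ψᴴ * H * Ψ = fromBlocks (diagonal fun i => (d i : 𝕜)) 0 0 (diagonal fun i => (d i : 𝕜)) := by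
  obtain ⟨R, hRh, hRJ, hRHR⟩ := exists_particleHole_invSqrt hH hJ
  have hRu : IsUnit R := IsUnit.of_mul_eq_one_right _ hRHR
  obtain ⟨W, a, ha, hWJ, hWW, hWS⟩ := exists_particleHole_diagonalization
    (M := R * signMatrix 𝕜 n * R)
    (by simp [IsHermitian, hRh.eq, conjTranspose_signMatrix, Matrix.mul_assoc])
    (by simp [hRJ, particleHole_signMatrix])
    ((hRu.mul (IsUnit.of_mul_eq_one _ signMatrix_mul_self)).mul hRu)
  obtain ⟨δ, hδh, hδc, hδa, hδδ⟩ := exists_diagonal_rescaling (𝕜 := 𝕜) ha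
  let D : Matrix (n ⊕ n) (n ⊕ n) 𝕜 := fromBlocks δ 0 0 δ
  have hDJ : particleHole D = D := by simp [D, particleHole_fromBlocks, hδc]
  have hDh : Dᴴ = D := by simp [D, fromBlocks_conjTranspose, hδh]
  refine ⟨R * W * D, fun i => (a i)⁻¹, by rw [map_mul, map_mul, hRJ, hWJ, hDJ], ?_, ?_⟩
  · calc (R * W * D)ᴴ * signMatrix 𝕜 n * (R * W * D)
        = D * (Wᴴ * (R * signMatrix 𝕜 n * R) * W) * D := by
          simp only [conjTranspose_mul, hRh.eq, hDh, Matrix.mul_assoc]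
      _ = signMatrix 𝕜 n := by
          rw [hWS, fromBlocks_multiply, fromBlocks_multiply]
          simp only [Matrix.mul_zero, Matrix.zero_mul, add_zero, zero_add, Matrix.mul_neg,
            Matrix.neg_mul, neg_zero, hδa, signMatrix]
  · calc (R * W * D)ᴴ * H * (R * W * D) = D * (Wᴴ * (R * H * R) * W) * D := by
          simp only [conjTranspose_mul, hRh.eq, hDh, Matrix.mul_assoc]
      _ = D * D := by rw [hRHR, Matrix.mul_one, hWW, Matrix.mul_one]
      _ = fromBlocks (δ * δ) 0 0 (δ * δ) := by simp [D, fromBlocks_multiply]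
      _ = _ := by rw [hδδ]

end Williamson

section QuasifreeState

variable {𝕜 n : Type*} [RCLike 𝕜] [Fintype n] [DecidableEq n]

theorem exists_gaugeInvariant_normalForm {A : Matrix (n ⊕ n) (n ⊕ n) 𝕜} (hA : A.PosSemidef)
    (hJ : particleHole A = A - signMatrix 𝕜 n) :
    ∃ (Ψ : Matrix (n ⊕ n) (n ⊕ n) 𝕜) (ρ : n → ℝ), (∀ i, 0 ≤ ρ i) ∧ particleHole Ψ = Ψ ∧
      Ψᴴ * signMatrix 𝕜 n * Ψ = signMatrix 𝕜 n ∧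
      Ψᴴ * A * Ψ = fromBlocks (1 + diagonal fun i => (ρ i : 𝕜)) 0 0
        (diagonal fun i => (ρ i : 𝕜)) := by
  have hsub : A - particleHole A = signMatrix 𝕜 n := by rw [hJ, sub_sub_cancel]
  have hH : (A + particleHole A).PosDef :=
    posDef_add_of_isUnit_sub hA (posSemidef_particleHole hA)
      (hsub ▸ IsUnit.of_mul_eq_one _ signMatrix_mul_self)
  obtain ⟨Ψ, d, hΨJ, hΨS, hΨH⟩ := exists_bosonic_williamson hH
    (by rw [map_add, particleHole_particleHole, add_comm])
  let ρ : n → ℝ := fun i => (d i - 1) / 2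
  let r : Matrix n n 𝕜 := diagonal fun i => (ρ i : 𝕜)
  have hd : (diagonal fun i => (d i : 𝕜)) = 1 + (2 : 𝕜) • r := by
    rw [← diagonal_smul, ← diagonal_one, diagonal_add, diagonal_eq_diagonal_iff]
    intro i
    have hdi : d i = 1 + 2 * ρ i := by simp only [ρ]; ring
    rw [hdi]
    push_cast
    simp
  have htwo : (2 : 𝕜) • (Ψᴴ * A * Ψ) = (2 : 𝕜) • fromBlocks (1 + r) 0 0 r := by
    calc (2 : 𝕜) • (Ψᴴ * A * Ψ)
        = Ψᴴ * (A + particleHole A) * Ψ + Ψᴴ * signMatrix 𝕜 n * Ψ := by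
          rw [← hsub, ← Matrix.add_mul, ← Matrix.mul_add, add_add_sub_cancel, two_smul,
            Matrix.mul_add, Matrix.add_mul]
      _ = (2 : 𝕜) • fromBlocks (1 + r) 0 0 r := by
          rw [hΨH, hΨS, hd, signMatrix, fromBlocks_add, fromBlocks_smul, fromBlocks_inj]
          exact ⟨by module, by simp, by simp, by module⟩
  have hΨA : Ψᴴ * A * Ψ = fromBlocks (1 + r) 0 0 r :=
    smul_right_injective _ (two_ne_zero' 𝕜) htwo
  refine ⟨Ψ, ρ, fun i => ?_, hΨJ, hΨS, hΨA⟩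
  have hpos := hA.conjTranspose_mul_mul_same Ψ
  rw [hΨA] at hpos
  simpa only [fromBlocks_apply₂₂, r, diagonal_apply_eq, RCLike.ofReal_nonneg] using
    hpos.diag_nonneg (i := Sum.inr i)

theorem quasifree_diagonalization_general {P : Matrix (n ⊕ n) (n ⊕ n) 𝕜}
    (hpos : (signMatrix 𝕜 n * P).PosSemidef) (hP : P + particleHole P = 1) :
    ∃ (U V : Matrix n n 𝕜) (ρ : n → ℝ), (∀ i, 0 ≤ ρ i) ∧
      fromBlocks U (V.map (starRingEnd 𝕜)) V (U.map (starRingEnd 𝕜)) * signMatrix 𝕜 n *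
          (fromBlocks U (V.map (starRingEnd 𝕜)) V (U.map (starRingEnd 𝕜)))ᴴ = signMatrix 𝕜 n ∧
      (fromBlocks U (V.map (starRingEnd 𝕜)) V (U.map (starRingEnd 𝕜)))ᴴ * P *
          ((fromBlocks U (V.map (starRingEnd 𝕜)) V (U.map (starRingEnd 𝕜)))ᴴ)⁻¹ =
        fromBlocks (1 + diagonal fun i => (ρ i : 𝕜)) 0 0 (-diagonal fun i => (ρ i : 𝕜)) := by
  obtain ⟨Ψ, ρ, hρ, hΨJ, hΨS, hΨA⟩ :=
    exists_gaugeInvariant_normalForm hpos (particleHole_signMatrix_mul hP)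
  have hφJ : particleHole (signMatrix 𝕜 n * Ψ * signMatrix 𝕜 n)
      = signMatrix 𝕜 n * Ψ * signMatrix 𝕜 n := by
    simp [particleHole_signMatrix, hΨJ]
  obtain ⟨U, V, hφ⟩ := exists_fromBlocks_of_particleHole_eq_self hφJ
  refine ⟨U, V, ρ, hρ, ?_, ?_⟩
  · rw [← hφ, signMatrix_conj_mul_signMatrix_mul_conjTranspose hΨS]
  · rw [← hφ, inv_eq_right_inv (conjTranspose_signMatrix_conj_mul_eq_one hΨS)]
    calc (signMatrix 𝕜 n * Ψ * signMatrix 𝕜 n)ᴴ * P * Ψ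
        = signMatrix 𝕜 n * (Ψᴴ * (signMatrix 𝕜 n * P) * Ψ) := by
          simp only [conjTranspose_mul, conjTranspose_signMatrix, Matrix.mul_assoc]
      _ = _ := by
          rw [hΨA, signMatrix, fromBlocks_multiply]
          simp only [Matrix.one_mul, Matrix.zero_mul, Matrix.mul_zero, Matrix.neg_mul, add_zero,
            zero_add]

end QuasifreeState

/-- Every quasi-free state is gauge-invariant (and diagonal) up to a
Bogoliubov transformation: there are `U, V` with `φ = [[U,V̄],[V,Ū]]`, `φSφ* = S`,
and a nonnegative diagonal `ρ` with `φ* P (φ*)⁻¹ = [[1+ρ, 0],[0, −ρ]]`. -/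
theorem quasifree_diagonalization (N : ℕ) (hN : 1 ≤ N)
    (P : Matrix (Fin N ⊕ Fin N) (Fin N ⊕ Fin N) ℂ)
    (S : Matrix (Fin N ⊕ Fin N) (Fin N ⊕ Fin N) ℂ)
    (hS : S = Matrix.fromBlocks 1 0 0 (-1))
    (K : Matrix (Fin N ⊕ Fin N) (Fin N ⊕ Fin N) ℂ)
    (hK : K = Matrix.fromBlocks 0 1 1 0)
    (h1 : Pᴴ * S = S * P)
    (h2 : (S * P).PosSemidef)
    (h3 : P + K * matConj P * K = 1) :
    ∃ (U V : Matrix (Fin N) (Fin N) ℂ) (ρ : Fin N → ℝ),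
      (∀ i, 0 ≤ ρ i) ∧
      (Matrix.fromBlocks U (matConj V) V (matConj U)) * S *
          (Matrix.fromBlocks U (matConj V) V (matConj U))ᴴ = S ∧
      (Matrix.fromBlocks U (matConj V) V (matConj U))ᴴ * P *
          ((Matrix.fromBlocks U (matConj V) V (matConj U))ᴴ)⁻¹ =
        Matrix.fromBlocks (1 + Matrix.diagonal (fun i => (ρ i : ℂ))) 0 0
          (-(Matrix.diagonal (fun i => (ρ i : ℂ)))) := by
  subst hS hK
  exact quasifree_diagonalization_general h2 (by rwa [particleHole_eq_mul_mul])
end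

section
/- There exist twice differentiable functions x₊, x₋ : ℝ → ℝ satisfying the Weber equation ẍ(t) + t²x(t) = 0 for all t, with x₊ even and x₋ odd, with Wronskian x₊ẋ₋ − ẋ₊x₋ = 1, and real constants c₊, c₋ > 0 with c₊·c₋ = √2, such that as t → +∞: √t·x₊(t) − c₊·cos(t²/2 − π/8) → 0, √t·x₋(t) − c₋·cos(t²/2 − 3π/8) → 0, ẋ₊(t)/√t + c₊·sin(t²/2 − π/8) → 0, and ẋ₋(t)/√t + c₋·sin(t²/2 − 3π/8) → 0. -/
open Real Filter

/-!
Rotating the argument by `π / 4` turns the equation of the parabolic cylinder function `D_{-1/2}`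
into the Weber equation, so `D_{-1/2}((1 + i)t)` is a complex solution. Up to a factor
`exp(-it² / 2)` it is a Laplace-type integral; rescaling the integration variable by `t` and
dominated convergence give its leading term, and that of its derivative, as `t → ∞`. The real
components of this solution oscillate with any prescribed phase, and the Wronskian of two of them,
being constant, is read off from the asymptotics. As `D_{-1/2}` and its derivative are real at `0`,
the components with phases `π / 8` and `3π / 8` have vanishing velocity and vanishing position at
`0`, so they are even and odd by uniqueness.
-/

section Mellin

open Set MeasureTheory Topology

theorem mellin_add_one_of_hasDerivAt {E : Type*} [NormedAddCommGroup E] [NormedSpace ℂ E]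
    [CompleteSpace E] {f f' : ℝ → E} {ν : ℂ} (hν : 0 < ν.re)
    (hf₀ : ContinuousWithinAt f (Ici 0) 0) (hf : ∀ s ∈ Ioi 0, HasDerivAt f (f' s) s)
    (hfν : MellinConvergent f ν) (hfν' : MellinConvergent f (ν + 1))
    (hf'ν : MellinConvergent f' (ν + 1)) :
    mellin f' (ν + 1) = -ν • mellin f ν := by
  have hν₀ : ν ≠ 0 := fun h => by simp [h] at hν
  simp only [MellinConvergent, add_sub_cancel_right] at hfν' hf'ν
  have hderiv : ∀ s ∈ Ioi (0 : ℝ), HasDerivAt (fun s : ℝ => (s : ℂ) ^ ν • f s)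
      ((s : ℂ) ^ ν • f' s + ν • (s : ℂ) ^ (ν - 1) • f s) s := fun s hs => by
    simpa only [mul_smul] using! (hasDerivAt_ofReal_cpow_const (ne_of_gt hs) hν₀).smul (hf s hs)
  have hint : IntegrableOn (fun s : ℝ => (s : ℂ) ^ ν • f' s + ν • (s : ℂ) ^ (ν - 1) • f s)
      (Ioi 0) := hf'ν.add (hfν.smul ν)
  have hcont : ContinuousWithinAt (fun s : ℝ => (s : ℂ) ^ ν • f s) (Ici 0) 0 :=
    (Complex.continuous_ofReal_cpow_const hν).continuousWithinAt.smul hf₀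
  have hparts := integral_Ioi_of_hasDerivAt_of_tendsto hcont hderiv hint
    (tendsto_zero_of_hasDerivAt_of_integrableOn_Ioi hderiv hint hfν')
  rw [show ∫ s in Ioi (0 : ℝ), (s : ℂ) ^ ν • f' s + ν • (s : ℂ) ^ (ν - 1) • f s = _ from
      integral_add hf'ν (hfν.smul ν), integral_smul, Complex.ofReal_zero,
    Complex.zero_cpow hν₀, zero_smul, sub_zero] at hparts
  simpa only [mellin, add_sub_cancel_right, neg_smul] using eq_neg_of_add_eq_zero_left hparts

theorem conj_mellin (f : ℝ → ℂ) (ν : ℂ) :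
    starRingEnd ℂ (mellin f ν) = mellin (fun s => starRingEnd ℂ (f s)) (starRingEnd ℂ ν) := by
  rw [mellin, ← integral_conj]
  refine setIntegral_congr_fun measurableSet_Ioi fun s hs => ?_
  have harg : (s : ℂ).arg ≠ π := by
    simpa only [Complex.arg_ofReal_of_nonneg (le_of_lt hs)] using pi_ne_zero.symm
  have hcpow := Complex.cpow_conj (s : ℂ) (ν - 1) harg
  rw [Complex.conj_ofReal, map_sub, map_one] at hcpow
  rw [hcpow, smul_eq_mul, smul_eq_mul, map_mul]

theorem mellinConvergent_cexp_neg_mul {ν ζ : ℂ} (hν : 0 < ν.re) (hζ : 0 < ζ.re) :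
    MellinConvergent (fun s : ℝ => Complex.exp (-(ζ * s))) ν := by
  have hcont : Continuous fun s : ℝ => Complex.exp (-(ζ * s)) := by fun_prop
  refine mellinConvergent_of_isBigO_rpow_exp hζ
    (hcont.locallyIntegrable.locallyIntegrableOn _) ?_ (b := 0) ?_ hν
  · refine .of_bound' (Eventually.of_forall fun s => ?_)
    simp [Complex.norm_exp]
  · simpa using (hcont.tendsto 0).mono_left nhdsWithin_le_nhds |>.isBigO_one ℝ

theorem mellin_cexp_neg_mul_one_half {ζ : ℂ} (hζ : 0 < ζ.re) :
    mellin (fun s : ℝ => Complex.exp (-(ζ * s))) (1 / 2) = (π / ζ) ^ (1 / 2 : ℂ) := by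
  have hgauss := mellin_comp_rpow (fun s : ℝ => Complex.exp (-(ζ * s))) 1 2
  have hone : mellin (fun s : ℝ => Complex.exp (-(ζ * ((s ^ (2 : ℝ) : ℝ) : ℂ)))) 1
      = (π / ζ) ^ (1 / 2 : ℂ) / 2 := by
    rw [← integral_gaussian_complex_Ioi hζ]
    simp [mellin]
  rw [hone, Complex.real_smul] at hgauss
  push_cast [abs_two] at hgauss
  linear_combination -2 * hgauss

end Mellin

section WeberKernel

open Set MeasureTheory Topology

/-- The integrand, without its power of `s`, of the Laplace-type integral for the parabolic cylinder
functions. -/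
noncomputable def weberKernel (z : ℂ) (s : ℝ) : ℂ := Complex.exp (-(s ^ 2 / 2) - z * s)

theorem norm_weberKernel (z : ℂ) (s : ℝ) :
    ‖weberKernel z s‖ = Real.exp (-(s ^ 2 / 2) - z.re * s) := by
  simp [weberKernel, Complex.norm_exp, ← Complex.ofReal_pow]

theorem continuous_weberKernel (z : ℂ) : Continuous (weberKernel z) := by
  unfold weberKernel
  fun_prop

theorem hasDerivAt_weberKernel_left (z : ℂ) (s : ℝ) :
    HasDerivAt (fun z => weberKernel z s) (-(s * weberKernel z s)) z := by
  refine (((hasDerivAt_id z).mul_const (s : ℂ)).const_sub _).cexp.congr_deriv ?_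
  simp only [weberKernel, id_eq]
  ring

theorem hasDerivAt_weberKernel_right (z : ℂ) (s : ℝ) :
    HasDerivAt (weberKernel z) (-(s * weberKernel z s) - z * weberKernel z s) s := by
  have h : HasDerivAt (fun s : ℂ => Complex.exp (-(s ^ 2 / 2) - z * s)) _ (s : ℂ) :=
    ((((hasDerivAt_id (s : ℂ)).pow 2).div_const 2).neg.sub
      ((hasDerivAt_id (s : ℂ)).const_mul z)).cexp
  refine h.comp_ofReal.congr_deriv ?_
  simp only [weberKernel, Pi.pow_apply, Pi.neg_apply, Pi.sub_apply, id_eq, Nat.cast_ofNat,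
    Nat.add_one_sub_one, pow_one]
  ring

variable {ν : ℂ}

theorem mellinConvergent_weberKernel (hν : 0 < ν.re) (z : ℂ) :
    MellinConvergent (weberKernel z) ν := by
  refine mellinConvergent_of_isBigO_rpow
    ((continuous_weberKernel z).locallyIntegrable.locallyIntegrableOn _) ?_ (lt_add_one _)
    (b := 0) ?_ hν
  · refine (cexp_neg_quadratic_isLittleO_rpow_atTop (a := -(1 / 2)) (by norm_num) (-z)
      _).isBigO.congr_left fun s => ?_
    rw [weberKernel]
    ring_nf
  · simpa using ((continuous_weberKernel z).tendsto 0).mono_left nhdsWithin_le_nhds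
      |>.isBigO_one ℝ

/-- The function `Γ(ν) exp(z²/4) D_{-ν}(z)`, as the Mellin transform of the Weber kernel, which
converges for `0 < ν.re`. -/
noncomputable def weberIntegral (ν z : ℂ) : ℂ := mellin (weberKernel z) ν

theorem hasMellin_mul_weberKernel (hν : 0 < ν.re) (z : ℂ) :
    HasMellin (fun s => s * weberKernel z s) ν (weberIntegral (ν + 1) z) := by
  have hν' : 0 < (ν + 1).re := by simpa using hν.trans (lt_add_one _)
  have h (s : ℝ) : (s : ℂ) * weberKernel z s = (s : ℂ) ^ (1 : ℂ) • weberKernel z s := by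
    rw [Complex.cpow_one, smul_eq_mul]
  simp only [h]
  exact ⟨MellinConvergent.cpow_smul.2 (mellinConvergent_weberKernel hν' z), mellin_cpow_smul _ _ _⟩

theorem hasDerivAt_weberIntegral (hν : 0 < ν.re) (z : ℂ) :
    HasDerivAt (weberIntegral ν) (-weberIntegral (ν + 1) z) z := by
  have hmeas (z : ℂ) : AEStronglyMeasurable (fun s : ℝ => (s : ℂ) ^ (ν - 1) • weberKernel z s)
      (volume.restrict (Ioi 0)) := (mellinConvergent_weberKernel hν z).aestronglyMeasurable
  obtain ⟨hconv, hval⟩ := hasMellin_mul_weberKernel hν z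
  have hbound : ∀ s ∈ Ioi (0 : ℝ), ∀ w ∈ Metric.ball z 1,
      ‖(s : ℂ) ^ (ν - 1) • -(s * weberKernel w s)‖
        ≤ ‖(s : ℂ) ^ (ν - 1) • (s * weberKernel (z - 1) s)‖ := by
    intro s hs w hw
    have hre : z.re - 1 ≤ w.re := by
      have := (Complex.abs_re_le_norm (z - w)).trans_lt (by rwa [← dist_eq_norm, dist_comm])
      rw [Complex.sub_re] at this
      linarith [le_abs_self (z.re - w.re)]
    rw [norm_smul, norm_smul, norm_neg, norm_mul, norm_mul, norm_weberKernel, norm_weberKernel,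
      Complex.sub_re, Complex.one_re]
    have := mul_le_mul_of_nonneg_right hre (le_of_lt hs)
    gcongr
  have key := (hasDerivAt_integral_of_dominated_loc_of_deriv_le (Metric.ball_mem_nhds z one_pos)
    (Eventually.of_forall hmeas) (mellinConvergent_weberKernel hν z)
    (F' := fun w s => (s : ℂ) ^ (ν - 1) • -(s * weberKernel w s))
    (by simpa only [smul_neg] using! hconv.aestronglyMeasurable.neg)
    (ae_restrict_of_forall_mem measurableSet_Ioi hbound)
    (hasMellin_mul_weberKernel hν (z - 1)).1.norm
    (Eventually.of_forall fun s w _ =>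
      (hasDerivAt_weberKernel_left w s).const_smul ((s : ℂ) ^ (ν - 1)))).2
  rw [← hval]
  simpa only [smul_neg, integral_neg] using! key

theorem weberIntegral_recurrence (hν : 0 < ν.re) (z : ℂ) :
    ν * weberIntegral ν z = weberIntegral (ν + 1 + 1) z + z * weberIntegral (ν + 1) z := by
  have hν' : 0 < (ν + 1).re := by simpa using hν.trans (lt_add_one _)
  have hk := mellinConvergent_weberKernel hν' z
  obtain ⟨hsk, hsk'⟩ := hasMellin_mul_weberKernel hν' z
  have hmul : HasMellin (fun s => -(s * weberKernel z s) - z * weberKernel z s) (ν + 1)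
      (-weberIntegral (ν + 1 + 1) z - z * weberIntegral (ν + 1) z) := by
    have := hasMellin_sub (hsk.const_smul (-1 : ℂ)) (hk.const_smul z)
    rw [mellin_const_smul, mellin_const_smul, hsk'] at this
    simpa only [smul_eq_mul, neg_one_mul] using! this
  have := mellin_add_one_of_hasDerivAt hν (continuous_weberKernel z).continuousWithinAt
    (fun s _ => hasDerivAt_weberKernel_right z s) (mellinConvergent_weberKernel hν z) hk hmul.1
  rw [hmul.2, smul_eq_mul] at this
  rw [weberIntegral]
  linear_combination this

theorem conj_weberIntegral (ν z : ℂ) :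
    starRingEnd ℂ (weberIntegral ν z) = weberIntegral (starRingEnd ℂ ν) (starRingEnd ℂ z) := by
  rw [weberIntegral, conj_mellin, weberIntegral]
  congr 1 with s
  simp [weberKernel, ← Complex.exp_conj, Complex.conj_ofNat]

theorem cpow_mul_weberIntegral (ν ζ : ℂ) {t : ℝ} (ht : 0 < t) :
    (t : ℂ) ^ ν * weberIntegral ν (ζ * t)
      = mellin (fun s => Complex.exp (-((s / t) ^ 2 / 2) - ζ * s)) ν := by
  have h := mellin_comp_mul_left (weberKernel (ζ * t)) ν (inv_pos.2 ht)
  have ht' : (t : ℂ) ≠ 0 := Complex.ofReal_ne_zero.2 ht.ne'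
  have harg : (t : ℂ).arg ≠ π := by
    simpa only [Complex.arg_ofReal_of_nonneg ht.le] using pi_ne_zero.symm
  rw [Complex.ofReal_inv, Complex.inv_cpow _ _ harg, Complex.cpow_neg, inv_inv] at h
  rw [weberIntegral, ← smul_eq_mul, ← h]
  congr! 2 with s
  rw [weberKernel]
  push_cast
  field_simp

theorem tendsto_cpow_mul_weberIntegral {ζ : ℂ} (hν : 0 < ν.re) (hζ : 0 < ζ.re) :
    Tendsto (fun t : ℝ => (t : ℂ) ^ ν * weberIntegral ν (ζ * t)) atTop
      (𝓝 (mellin (fun s => Complex.exp (-(ζ * s))) ν)) := by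
  refine Tendsto.congr' ((eventually_gt_atTop 0).mono fun t ht =>
    (cpow_mul_weberIntegral ν ζ ht).symm) ?_
  refine tendsto_integral_filter_of_dominated_convergence _ ?_ ?_
    (mellinConvergent_cexp_neg_mul hν hζ).norm ?_
  · refine Eventually.of_forall fun t => Measurable.aestronglyMeasurable ?_
    fun_prop
  · refine Eventually.of_forall fun t => Eventually.of_forall fun s => ?_
    rw [norm_smul, norm_smul, Complex.norm_exp, Complex.norm_exp]
    refine mul_le_mul_of_nonneg_left (Real.exp_le_exp.2 ?_) (norm_nonneg _)
    have hsq : (((s : ℂ) / t) ^ 2 / 2).re = (s / t) ^ 2 / 2 := by exact_mod_cast Complex.ofReal_re _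
    rw [Complex.sub_re, Complex.neg_re, Complex.neg_re, hsq]
    linarith [sq_nonneg (s / t)]
  · refine Eventually.of_forall fun s => Tendsto.const_smul ?_ _
    have hst : Tendsto (fun t : ℝ => (s / t : ℂ)) atTop (𝓝 0) := by
      exact_mod_cast (Complex.continuous_ofReal.tendsto 0).comp
        (tendsto_const_nhds.div_atTop tendsto_id)
    have hlim := (((hst.pow 2).div_const 2).neg.sub_const (ζ * s)).cexp
    simpa using hlim

end WeberKernel

section ParabolicCylinder

open Topology

variable {ν : ℂ}

/-- The parabolic cylinder function `Γ(ν) D_{-ν}(z)`, by its integral representation for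
`0 < ν.re`. -/
noncomputable def parabolicCylinder (ν z : ℂ) : ℂ := Complex.exp (-(z ^ 2 / 4)) * weberIntegral ν z

theorem parabolicCylinder_recurrence (hν : 0 < ν.re) (z : ℂ) :
    ν * parabolicCylinder ν z
      = parabolicCylinder (ν + 1 + 1) z + z * parabolicCylinder (ν + 1) z := by
  simp only [parabolicCylinder]
  linear_combination Complex.exp (-(z ^ 2 / 4)) * weberIntegral_recurrence hν z

theorem conj_parabolicCylinder (ν z : ℂ) :
    starRingEnd ℂ (parabolicCylinder ν z)
      = parabolicCylinder (starRingEnd ℂ ν) (starRingEnd ℂ z) := by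
  simp [parabolicCylinder, conj_weberIntegral, ← Complex.exp_conj, Complex.conj_ofNat]

theorem im_parabolicCylinder_ofReal (ν x : ℝ) : (parabolicCylinder ν x).im = 0 :=
  Complex.conj_eq_iff_im.1 (by simp only [conj_parabolicCylinder, Complex.conj_ofReal])

theorem hasDerivAt_parabolicCylinder (hν : 0 < ν.re) (z : ℂ) :
    HasDerivAt (parabolicCylinder ν)
      (-(z / 2) * parabolicCylinder ν z - parabolicCylinder (ν + 1) z) z := by
  have hexp : HasDerivAt (fun z : ℂ => Complex.exp (-(z ^ 2 / 4))) _ z :=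
    (((hasDerivAt_id z).pow 2).div_const 4).neg.cexp
  refine (hexp.mul (hasDerivAt_weberIntegral hν z)).congr_deriv ?_
  simp only [parabolicCylinder, Pi.pow_apply, Pi.neg_apply, id_eq, Nat.cast_ofNat,
    Nat.add_one_sub_one, pow_one]
  ring

theorem deriv_parabolicCylinder (hν : 0 < ν.re) (z : ℂ) :
    deriv (parabolicCylinder ν) z
      = -(z / 2) * parabolicCylinder ν z - parabolicCylinder (ν + 1) z :=
  (hasDerivAt_parabolicCylinder hν z).deriv

theorem hasDerivAt_deriv_parabolicCylinder (hν : 0 < ν.re) (z : ℂ) :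
    HasDerivAt (deriv (parabolicCylinder ν))
      ((z ^ 2 / 4 + ν - 1 / 2) * parabolicCylinder ν z) z := by
  have hν' : 0 < (ν + 1).re := by simpa using hν.trans (lt_add_one _)
  have h : HasDerivAt (fun z => -(z / 2) * parabolicCylinder ν z - parabolicCylinder (ν + 1) z)
      _ z :=
    (((hasDerivAt_id z).div_const 2).neg.mul (hasDerivAt_parabolicCylinder hν z)).sub
      (hasDerivAt_parabolicCylinder hν' z)
  rw [← funext (deriv_parabolicCylinder hν)] at h
  refine h.congr_deriv ?_
  simp only [id_eq, Pi.neg_apply]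
  linear_combination -parabolicCylinder_recurrence hν z

theorem tendsto_parabolicCylinder_ray {ζ : ℂ} (hν : 0 < ν.re) (hζ : 0 < ζ.re) :
    Tendsto (fun t : ℝ => Complex.exp ((ζ * t) ^ 2 / 4) * (t ^ ν * parabolicCylinder ν (ζ * t)))
      atTop (𝓝 (mellin (fun s => Complex.exp (-(ζ * s))) ν)) := by
  refine (tendsto_cpow_mul_weberIntegral hν hζ).congr fun t => ?_
  have hexp : Complex.exp ((ζ * t) ^ 2 / 4) * Complex.exp (-((ζ * t) ^ 2 / 4)) = 1 := by
    rw [← Complex.exp_add, add_neg_cancel, Complex.exp_zero]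
  rw [parabolicCylinder]
  linear_combination -(t ^ ν * weberIntegral ν (ζ * t)) * hexp

theorem tendsto_deriv_parabolicCylinder_ray {ζ : ℂ} (hν : 0 < ν.re) (hζ : 0 < ζ.re) :
    Tendsto (fun t : ℝ => Complex.exp ((ζ * t) ^ 2 / 4) *
        (t ^ (ν - 1) * deriv (parabolicCylinder ν) (ζ * t)))
      atTop (𝓝 (-(ζ / 2) * mellin (fun s => Complex.exp (-(ζ * s))) ν)) := by
  have hν' : 0 < (ν + 1).re := by simpa using hν.trans (lt_add_one _)
  have hinv : Tendsto (fun t : ℝ => ((t : ℂ)⁻¹) ^ 2) atTop (𝓝 0) := by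
    simpa using! ((Complex.continuous_ofReal.tendsto 0).comp tendsto_inv_atTop_zero).pow 2
  have hlim := ((tendsto_parabolicCylinder_ray hν hζ).const_mul (-(ζ / 2))).sub
    (hinv.mul (tendsto_parabolicCylinder_ray hν' hζ))
  rw [zero_mul, sub_zero] at hlim
  refine hlim.congr' ((eventually_gt_atTop 0).mono fun t ht => ?_)
  have ht' : (t : ℂ) ≠ 0 := Complex.ofReal_ne_zero.2 ht.ne'
  dsimp only
  rw [deriv_parabolicCylinder hν, Complex.cpow_sub _ _ ht', Complex.cpow_add _ _ ht',
    Complex.cpow_one]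
  field_simp

end ParabolicCylinder

/-- `x` solves `ẍ + q x = 0` on the whole line, with velocity `v = ẋ`. -/
structure IsOscillatorSolution {E : Type*} [NormedAddCommGroup E] [NormedSpace ℝ E]
    (q : ℝ → ℝ) (x v : ℝ → E) : Prop where
  hasDerivAt : ∀ t, HasDerivAt x (v t) t
  hasDerivAt_velocity : ∀ t, HasDerivAt v (-(q t • x t)) t

namespace IsOscillatorSolution

section Vector

variable {E F : Type*} [NormedAddCommGroup E] [NormedSpace ℝ E] [NormedAddCommGroup F]
  [NormedSpace ℝ F] {q : ℝ → ℝ} {x v : ℝ → E}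

theorem clm_comp (h : IsOscillatorSolution q x v) (L : E →L[ℝ] F) :
    IsOscillatorSolution q (fun t => L (x t)) (fun t => L (v t)) where
  hasDerivAt t := L.hasFDerivAt.comp_hasDerivAt t (h.hasDerivAt t)
  hasDerivAt_velocity t := by
    simpa using! L.hasFDerivAt.comp_hasDerivAt t (h.hasDerivAt_velocity t)

theorem neg (h : IsOscillatorSolution q x v) :
    IsOscillatorSolution q (fun t => -x t) (fun t => -v t) :=
  h.clm_comp (-ContinuousLinearMap.id ℝ E)

theorem comp_neg (h : IsOscillatorSolution q x v) (hq : ∀ t, q (-t) = q t) :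
    IsOscillatorSolution q (fun t => x (-t)) (fun t => -v (-t)) where
  hasDerivAt t := by
    simpa using! (h.hasDerivAt (-t)).scomp t (hasDerivAt_neg t)
  hasDerivAt_velocity t := by
    simpa [hq] using! ((h.hasDerivAt_velocity (-t)).scomp t (hasDerivAt_neg t)).neg

end Vector

variable {q x v y w : ℝ → ℝ}

theorem wronskian_eq (hx : IsOscillatorSolution q x v) (hy : IsOscillatorSolution q y w)
    (s t : ℝ) : x s * w s - v s * y s = x t * w t - v t * y t := by
  have h (t : ℝ) : HasDerivAt (fun t => x t * w t - v t * y t) 0 t := by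
    refine (((hx.hasDerivAt t).mul (hy.hasDerivAt_velocity t)).sub
      ((hx.hasDerivAt_velocity t).mul (hy.hasDerivAt t))).congr_deriv ?_
    simp only [smul_eq_mul]
    ring
  exact is_const_of_deriv_eq_zero (fun t => (h t).differentiableAt) (fun t => (h t).deriv) s t

theorem eq_of_wronskian_ne_zero {u p : ℝ → ℝ} (hx : IsOscillatorSolution q x v)
    (hu : IsOscillatorSolution q u p) (hy : IsOscillatorSolution q y w) {t₀ : ℝ}
    (hxy : x t₀ * w t₀ - v t₀ * y t₀ ≠ 0) (hux : u t₀ = x t₀) (hpv : p t₀ = v t₀) (t : ℝ) :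
    u t = x t := by
  have h₁ := hx.wronskian_eq hy t t₀
  have h₂ := hu.wronskian_eq hy t t₀
  have h₃ := hu.wronskian_eq hx t t₀
  rw [hux, hpv] at h₂ h₃
  refine mul_right_cancel₀ hxy ?_
  linear_combination -u t * h₁ + x t * h₂ - y t * h₃

theorem even_of_velocity_zero (hx : IsOscillatorSolution q x v) (hy : IsOscillatorSolution q y w)
    (hq : ∀ t, q (-t) = q t) (hxy : x 0 * w 0 - v 0 * y 0 ≠ 0) (hv : v 0 = 0) (t : ℝ) :
    x (-t) = x t :=
  hx.eq_of_wronskian_ne_zero (hx.comp_neg hq) hy hxy (by rw [neg_zero])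
    (by rw [neg_zero, hv, neg_zero]) t

theorem odd_of_apply_zero (hx : IsOscillatorSolution q x v) (hy : IsOscillatorSolution q y w)
    (hq : ∀ t, q (-t) = q t) (hxy : x 0 * w 0 - v 0 * y 0 ≠ 0) (hx₀ : x 0 = 0) (t : ℝ) :
    x (-t) = -x t :=
  neg_eq_iff_eq_neg.1 <| hx.eq_of_wronskian_ne_zero (hx.comp_neg hq).neg hy hxy
    (by rw [neg_zero, hx₀, neg_zero]) (by rw [neg_zero, neg_neg]) t

end IsOscillatorSolution

section Quadrature

open Complex Topology

theorem tendsto_clm_sub_clm_cexp_neg_mul {X E : Type*} [NormedAddCommGroup E] [NormedSpace ℝ E]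
    {l : Filter X} {h : X → ℂ} {a : ℂ} {θ : X → ℝ} (L : ℂ →L[ℝ] E)
    (hh : Tendsto (fun t => cexp (θ t * I) * h t) l (𝓝 a)) :
    Tendsto (fun t => L (h t) - L (cexp (-(θ t * I)) * a)) l (𝓝 0) := by
  have hbound (t : X) : ‖L (h t) - L (cexp (-(θ t * I)) * a)‖
      ≤ ‖L‖ * ‖cexp (θ t * I) * h t - a‖ := by
    have hphase : cexp (θ t * I) * cexp (-(θ t * I)) = 1 := by
      rw [← Complex.exp_add, add_neg_cancel, Complex.exp_zero]
    have hrot : h t - cexp (-(θ t * I)) * a = cexp (-(θ t * I)) * (cexp (θ t * I) * h t - a) := by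
      linear_combination -h t * hphase
    have hnorm : ‖cexp (-(θ t * I))‖ = 1 := by
      simpa using norm_exp_ofReal_mul_I (-θ t)
    calc ‖L (h t) - L (cexp (-(θ t * I)) * a)‖
      _ = ‖L (h t - cexp (-(θ t * I)) * a)‖ := by rw [map_sub]
      _ ≤ ‖L‖ * ‖h t - cexp (-(θ t * I)) * a‖ := L.le_opNorm _
      _ = ‖L‖ * ‖cexp (θ t * I) * h t - a‖ := by rw [hrot, norm_mul, hnorm, one_mul]
  refine squeeze_zero_norm hbound ?_
  simpa using (hh.sub_const a).norm.const_mul ‖L‖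

/-- The real component of amplitude `c` and phase `φ` of a complex oscillation: it sends
`exp(-iθ)` to `c cos(θ - φ)`. -/
noncomputable def quadrature (c φ : ℝ) : ℂ →L[ℝ] ℝ :=
  c • reCLM ∘L ContinuousLinearMap.mul ℝ ℂ (cexp (φ * I))

theorem quadrature_apply (c φ : ℝ) (z : ℂ) : quadrature c φ z = c * (cexp (φ * I) * z).re := rfl

theorem quadrature_wronskian (c d φ ψ : ℝ) (z w : ℂ) :
    quadrature c φ z * quadrature d ψ w - quadrature c φ w * quadrature d ψ z
      = -(c * d * Real.sin (ψ - φ) * (starRingEnd ℂ z * w).im) := by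
  simp only [quadrature_apply, mul_re, mul_im, exp_ofReal_mul_I_re, exp_ofReal_mul_I_im, conj_re,
    conj_im, Real.sin_sub]
  ring

theorem cexp_mul_I_mul_cexp_neg_mul_I (φ θ : ℝ) :
    cexp (φ * I) * cexp (-(θ * I)) = cexp ((φ - θ : ℝ) * I) := by
  rw [← Complex.exp_add]
  push_cast
  ring_nf

theorem quadrature_exp_neg (c φ θ : ℝ) :
    quadrature c φ (cexp (-(θ * I))) = c * Real.cos (θ - φ) := by
  rw [quadrature_apply, cexp_mul_I_mul_cexp_neg_mul_I, exp_ofReal_mul_I_re, ← Real.cos_neg, neg_sub]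

theorem quadrature_exp_neg_mul_neg_I (c φ θ : ℝ) :
    quadrature c φ (cexp (-(θ * I)) * -I) = -(c * Real.sin (θ - φ)) := by
  rw [quadrature_apply, ← mul_assoc, cexp_mul_I_mul_cexp_neg_mul_I, mul_neg, neg_re, mul_I_re,
    neg_neg, exp_ofReal_mul_I_im, ← neg_sub θ, Real.sin_neg, mul_neg]

end Quadrature

section WeberWave

open Complex Topology

theorem one_add_I_ne_zero : 1 + I ≠ 0 := fun h => by simpa using congrArg re h

theorem one_add_I_mul_sq_div_four (t : ℝ) : ((1 + I) * t) ^ 2 / 4 = (t ^ 2 / 2 : ℝ) * I := by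
  push_cast
  linear_combination t ^ 2 / 4 * I_sq

theorem ofReal_cpow_one_half {t : ℝ} (ht : 0 ≤ t) : (t : ℂ) ^ (1 / 2 : ℂ) = √t := by
  rw [Real.sqrt_eq_rpow, ofReal_cpow ht]
  norm_num

/-- The leading coefficient of `parabolicCylinder (1 / 2)` along the ray through `1 + i`. -/
noncomputable def weberAmplitude : ℂ := (π / (1 + I)) ^ (1 / 2 : ℂ)

theorem weberAmplitude_eq : weberAmplitude = √(π / √2) * cexp (-(π / 8 : ℝ) * I) := by
  have hre : 0 < ((√(π / √2) : ℂ) * cexp (-(π / 8 : ℝ) * I)).re := by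
    rw [← ofReal_neg, re_ofReal_mul, exp_ofReal_mul_I_re]
    have := Real.cos_pos_of_mem_Ioo (x := -(π / 8)) ⟨by linarith [pi_pos], by linarith [pi_pos]⟩
    positivity
  have hsq : ((√(π / √2) : ℂ) * cexp (-(π / 8 : ℝ) * I)) ^ 2 = π / (1 + I) := by
    have hsqrt : (√(π / √2) : ℂ) ^ 2 = π / √2 := by
      exact_mod_cast Real.sq_sqrt (by positivity)
    have hexp : cexp (-(π / 8 : ℝ) * I) ^ 2 = √2 / 2 * (1 - I) := by
      have hdouble : (2 : ℕ) * (-(π / 8 : ℝ) * I) = (-(π / 4) : ℝ) * I := by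
        push_cast
        ring
      rw [← Complex.exp_nat_mul, hdouble, exp_ofReal_mul_I, Real.cos_neg, Real.sin_neg,
        Real.cos_pi_div_four, Real.sin_pi_div_four]
      push_cast
      ring
    have hsqrt2 : (√2 : ℂ) ≠ 0 := ofReal_ne_zero.2 (by positivity)
    rw [mul_pow, hsqrt, hexp, eq_div_iff one_add_I_ne_zero]
    field_simp
    linear_combination -I_sq
  rw [weberAmplitude, ← hsq, one_div, sq_cpow_two_inv hre]

theorem weberAmplitude_ne_zero : weberAmplitude ≠ 0 := by
  rw [weberAmplitude_eq]
  exact mul_ne_zero (ofReal_ne_zero.2 (by positivity)) (exp_ne_zero _)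

/-- The multiple of `D_{-1/2}((1 + i)t)`, a solution of `ẍ + t²x = 0`, that is normalized to
`weberWave t ~ t^{-1/2} exp(-it²/2)` as `t → ∞`. -/
noncomputable def weberWave (t : ℝ) : ℂ :=
  parabolicCylinder (1 / 2) ((1 + I) * t) / weberAmplitude

/-- The velocity of `weberWave`. -/
noncomputable def weberWaveVelocity (t : ℝ) : ℂ :=
  (1 + I) * deriv (parabolicCylinder (1 / 2)) ((1 + I) * t) / weberAmplitude

theorem isOscillatorSolution_weberWave :
    IsOscillatorSolution (fun t => t ^ 2) weberWave weberWaveVelocity := by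
  have hν : 0 < (1 / 2 : ℂ).re := by norm_num
  have hray (t : ℝ) : HasDerivAt (fun t : ℝ => (1 + I) * (t : ℂ)) (1 + I) t := by
    simpa using (hasDerivAt_id t).ofReal_comp.const_mul (1 + I)
  refine ⟨fun t => ?_, fun t => ?_⟩
  · refine (((hasDerivAt_parabolicCylinder hν _).differentiableAt.hasDerivAt.comp t
      (hray t)).div_const _).congr_deriv ?_
    rw [weberWaveVelocity, mul_comm]
  · refine ((((hasDerivAt_deriv_parabolicCylinder hν _).comp t (hray t)).const_mul
      (1 + I)).div_const _).congr_deriv ?_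
    have hζ : (1 + I) ^ 4 = -4 := by
      linear_combination (I ^ 2 + 4 * I + 5) * I_sq
    rw [weberWave, real_smul, ofReal_pow]
    linear_combination
      (t ^ 2 / 4 * parabolicCylinder (1 / 2) ((1 + I) * t) / weberAmplitude) * hζ

theorem tendsto_weberWave :
    Tendsto (fun t : ℝ => cexp ((t ^ 2 / 2 : ℝ) * I) * (√t * weberWave t)) atTop (𝓝 1) := by
  have hζ : 0 < (1 + I).re := by simp
  have hlim := (tendsto_parabolicCylinder_ray (ν := 1 / 2) (by norm_num) hζ).div_const
    weberAmplitude
  rw [mellin_cexp_neg_mul_one_half hζ, ← weberAmplitude, div_self weberAmplitude_ne_zero] at hlim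
  refine hlim.congr' ((eventually_ge_atTop 0).mono fun t ht => ?_)
  dsimp only
  rw [one_add_I_mul_sq_div_four, ofReal_cpow_one_half ht, weberWave]
  ring

theorem tendsto_weberWaveVelocity :
    Tendsto (fun t : ℝ => cexp ((t ^ 2 / 2 : ℝ) * I) * (weberWaveVelocity t / √t)) atTop
      (𝓝 (-I)) := by
  have hζ : 0 < (1 + I).re := by simp
  have hlim := ((tendsto_deriv_parabolicCylinder_ray (ν := 1 / 2) (by norm_num) hζ).const_mul
    (1 + I)).div_const weberAmplitude
  have hval : (1 + I) * (-((1 + I) / 2) * weberAmplitude) / weberAmplitude = -I := by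
    rw [div_eq_iff weberAmplitude_ne_zero]
    linear_combination -(weberAmplitude / 2) * I_sq
  rw [mellin_cexp_neg_mul_one_half hζ, ← weberAmplitude, hval] at hlim
  refine hlim.congr' ((eventually_gt_atTop 0).mono fun t ht => ?_)
  have hcpow : (t : ℂ) ^ (1 / 2 - 1 : ℂ) = (√t : ℂ)⁻¹ := by
    rw [← ofReal_cpow_one_half ht.le, ← cpow_neg]
    norm_num
  dsimp only
  rw [one_add_I_mul_sq_div_four, hcpow, weberWaveVelocity]
  ring

theorem im_conj_weberWave_mul_velocity (t : ℝ) :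
    (starRingEnd ℂ (weberWave t) * weberWaveVelocity t).im = -1 := by
  have hF := isOscillatorSolution_weberWave
  have hwronskian (z w : ℂ) : (starRingEnd ℂ z * w).im = z.re * w.im - w.re * z.im := by
    simp only [mul_im, conj_re, conj_im]
    ring
  have hconst (s : ℝ) : (starRingEnd ℂ (weberWave s) * weberWaveVelocity s).im
      = (starRingEnd ℂ (weberWave t) * weberWaveVelocity t).im := by
    rw [hwronskian, hwronskian]
    exact (hF.clm_comp reCLM).wronskian_eq (hF.clm_comp imCLM) s t
  have hlim := (continuous_im.tendsto _).comp
    (((continuous_conj.tendsto _).comp tendsto_weberWave).mul tendsto_weberWaveVelocity)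
  have hval : (starRingEnd ℂ 1 * -I).im = -1 := by simp
  rw [hval] at hlim
  refine tendsto_nhds_unique (tendsto_const_nhds.congr' ?_) hlim
  refine (eventually_gt_atTop 0).mono fun s hs => ?_
  have hphase : starRingEnd ℂ (cexp ((s ^ 2 / 2 : ℝ) * I)) * cexp ((s ^ 2 / 2 : ℝ) * I) = 1 := by
    rw [conj_mul', norm_exp_ofReal_mul_I, ofReal_one, one_pow]
  have hsqrt : (√s : ℂ) ≠ 0 := ofReal_ne_zero.2 (Real.sqrt_pos.2 hs).ne'
  rw [← hconst s]
  simp only [Function.comp_apply, map_mul, conj_ofReal]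
  congr 1
  field_simp
  linear_combination -(starRingEnd ℂ (weberWave s) * weberWaveVelocity s) * hphase

theorem quadrature_weberWave_wronskian (c d φ ψ t : ℝ) :
    quadrature c φ (weberWave t) * quadrature d ψ (weberWaveVelocity t)
      - quadrature c φ (weberWaveVelocity t) * quadrature d ψ (weberWave t)
      = c * d * Real.sin (ψ - φ) := by
  rw [quadrature_wronskian, im_conj_weberWave_mul_velocity]
  ring

theorem tendsto_sqrt_mul_quadrature_weberWave_sub (c φ : ℝ) :
    Tendsto (fun t => √t * quadrature c φ (weberWave t) - c * Real.cos (t ^ 2 / 2 - φ))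
      atTop (𝓝 0) := by
  refine (tendsto_clm_sub_clm_cexp_neg_mul (quadrature c φ) tendsto_weberWave).congr fun t => ?_
  rw [mul_one, quadrature_exp_neg, ← real_smul, map_smul, smul_eq_mul]

theorem tendsto_quadrature_weberWaveVelocity_div_sqrt_add (c φ : ℝ) :
    Tendsto (fun t => quadrature c φ (weberWaveVelocity t) / √t + c * Real.sin (t ^ 2 / 2 - φ))
      atTop (𝓝 0) := by
  have h := tendsto_clm_sub_clm_cexp_neg_mul (quadrature c φ) tendsto_weberWaveVelocity
  refine h.congr fun t => ?_
  rw [quadrature_exp_neg_mul_neg_I, sub_neg_eq_add, div_eq_inv_mul _ (√t : ℂ), ← ofReal_inv,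
    ← real_smul, map_smul, smul_eq_mul, div_eq_inv_mul _ √t]

theorem quadrature_div_weberAmplitude (c φ : ℝ) (z : ℂ) :
    quadrature c φ (z / weberAmplitude) = quadrature (c / √(π / √2)) (φ + π / 8) z := by
  have hrot : cexp (φ * I) * (z / (√(π / √2) * cexp (-(π / 8 : ℝ) * I)))
      = ((√(π / √2))⁻¹ : ℝ) * (cexp ((φ + π / 8 : ℝ) * I) * z) := by
    rw [neg_mul, Complex.exp_neg, ofReal_add, add_mul, Complex.exp_add, ofReal_inv]
    field_simp
  rw [quadrature_apply, quadrature_apply, weberAmplitude_eq, hrot, re_ofReal_mul]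
  ring

theorem quadrature_weberWaveVelocity_zero (c : ℝ) :
    quadrature c (π / 8) (weberWaveVelocity 0) = 0 := by
  have him : (parabolicCylinder (2⁻¹ + 1) 0).im = 0 := by
    simpa using im_parabolicCylinder_ofReal (2⁻¹ + 1) 0
  rw [weberWaveVelocity, quadrature_div_weberAmplitude, quadrature_apply,
    deriv_parabolicCylinder (by norm_num), show π / 8 + π / 8 = π / 4 by ring, exp_ofReal_mul_I,
    Real.cos_pi_div_four, Real.sin_pi_div_four]
  simp [him]

theorem quadrature_weberWave_zero (c : ℝ) : quadrature c (3 * π / 8) (weberWave 0) = 0 := by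
  have him : (parabolicCylinder 2⁻¹ 0).im = 0 := by
    simpa using im_parabolicCylinder_ofReal 2⁻¹ 0
  rw [weberWave, quadrature_div_weberAmplitude, quadrature_apply,
    show 3 * π / 8 + π / 8 = π / 2 by ring, exp_ofReal_mul_I, Real.cos_pi_div_two,
    Real.sin_pi_div_two]
  simpa using .inr him

end WeberWave

/-- Existence of Wronskian-normalized even/odd solutions of the Weber
equation `ẍ + t²x = 0` with the stated oscillatory asymptotics and amplitude product
`c₊·c₋ = √2`. -/
theorem weber_solutions_asymptotics :
    ∃ (xp vp xm vm : ℝ → ℝ) (cp cm : ℝ),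
      (∀ t, HasDerivAt xp (vp t) t) ∧ (∀ t, HasDerivAt vp (-(t ^ 2 * xp t)) t) ∧
      (∀ t, HasDerivAt xm (vm t) t) ∧ (∀ t, HasDerivAt vm (-(t ^ 2 * xm t)) t) ∧
      (∀ t, xp (-t) = xp t) ∧ (∀ t, xm (-t) = -xm t) ∧
      (∀ t, xp t * vm t - vp t * xm t = 1) ∧
      0 < cp ∧ 0 < cm ∧ cp * cm = Real.sqrt 2 ∧
      Tendsto (fun t : ℝ => Real.sqrt t * xp t - cp * Real.cos (t ^ 2 / 2 - π / 8))
        atTop (nhds 0) ∧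
      Tendsto (fun t : ℝ => Real.sqrt t * xm t - cm * Real.cos (t ^ 2 / 2 - 3 * π / 8))
        atTop (nhds 0) ∧
      Tendsto (fun t : ℝ => vp t / Real.sqrt t + cp * Real.sin (t ^ 2 / 2 - π / 8))
        atTop (nhds 0) ∧
      Tendsto (fun t : ℝ => vm t / Real.sqrt t + cm * Real.sin (t ^ 2 / 2 - 3 * π / 8))
        atTop (nhds 0) := by
  have hp := isOscillatorSolution_weberWave.clm_comp (quadrature √2 (π / 8))
  have hm := isOscillatorSolution_weberWave.clm_comp (quadrature 1 (3 * π / 8))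
  have hw (t : ℝ) := quadrature_weberWave_wronskian √2 1 (π / 8) (3 * π / 8) t
  have hone : √2 * 1 * sin (3 * π / 8 - π / 8) = 1 := by
    rw [show 3 * π / 8 - π / 8 = π / 4 by ring, sin_pi_div_four]
    linear_combination (1 / 2) * Real.sq_sqrt (zero_le_two (α := ℝ))
  simp only [hone] at hw
  have hq (t : ℝ) : (-t) ^ 2 = t ^ 2 := neg_sq t
  refine ⟨_, _, _, _, √2, 1, hp.hasDerivAt, hp.hasDerivAt_velocity, hm.hasDerivAt,
    hm.hasDerivAt_velocity, ?_, ?_, hw, by positivity, one_pos, mul_one _,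
    tendsto_sqrt_mul_quadrature_weberWave_sub _ _, tendsto_sqrt_mul_quadrature_weberWave_sub _ _,
    tendsto_quadrature_weberWaveVelocity_div_sqrt_add _ _,
    tendsto_quadrature_weberWaveVelocity_div_sqrt_add _ _⟩
  · exact hp.even_of_velocity_zero hm hq (by simp [hw]) (quadrature_weberWaveVelocity_zero _)
  · exact hm.odd_of_apply_zero hp hq (by linarith [hw 0]) (quadrature_weberWave_zero _)
end
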